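/- (Corollary 6) Let λ = 1/2, n ≥ 1, m ∈ {1,…,n}, and set L^{(m)} = −(1/16)·(ξ_m∘D − 2E'∘(∂/∂u_m))∘D, an element of the Weyl algebra W (here ξ_m denotes the multiplication operator by ξ_m, and E' = E + n/2 ∈ W). Then for all ψ ∈ A: C^{1/2}_2(ξ_m, ψ) = C^{1/2}_2(ψ, ξ_m) = (E'(E'+1))^{−1}(L^{(m)}ψ); equivalently, E'(E'+1)(C^{1/2}_2(ξ_m,ψ)) = L^{(m)}ψ. -/

import Mathlib

open MvPolynomial

/-- The polynomial symbol algebra `A = ℂ[u₁,…,uₙ,ξ₁,…,ξₙ]`: variables `Sum.inl i` are the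
`uᵢ` and variables `Sum.inr i` are the `ξᵢ`. -/
abbrev PolA (n : ℕ) := MvPolynomial (Fin n ⊕ Fin n) ℂ

namespace LO

/-- ξ-degree of a monomial exponent. -/
def xiDeg {n : ℕ} (d : (Fin n ⊕ Fin n) →₀ ℕ) : ℕ :=
  ∑ i : Fin n, d (Sum.inr i)

/-- `c(E)`: the operator multiplying the ξ-degree-`m` component by `c m`. -/
noncomputable def cE {n : ℕ} (c : ℕ → ℂ) (φ : PolA n) : PolA n :=
  ∑ d ∈ φ.support, monomial d (c (xiDeg d) * coeff d φ)

/-- `D = Σᵢ ∂²/∂uᵢ∂ξᵢ`. -/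
noncomputable def Dop {n : ℕ} (φ : PolA n) : PolA n :=
  ∑ i : Fin n, pderiv (Sum.inl i) (pderiv (Sum.inr i) φ)

/-- The scalar `h^λ_d(m)`. -/
noncomputable def hScal (n : ℕ) (lam : ℂ) (d m : ℕ) : ℂ :=
  (d.factorial : ℂ)⁻¹ *
    ∏ j ∈ Finset.range d,
      ((m : ℂ) + (j : ℂ) + lam * ((n : ℂ) + 1)) /
        (2 * (m : ℂ) + (j : ℂ) + (n : ℂ) + (d : ℂ))

/-- The scalar `g^λ_d(m)`. -/
noncomputable def gScal (n : ℕ) (lam : ℂ) (d m : ℕ) : ℂ :=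
  (d.factorial : ℂ)⁻¹ *
    ∏ j ∈ Finset.range d,
      (-(m : ℂ) - (j : ℂ) - lam * ((n : ℂ) + 1)) /
        (2 * (m : ℂ) + (j : ℂ) + (n : ℂ) + 1)

/-- `bh^λ_d = h^λ_d(E) ∘ D^d` (equal to the identity for `d = 0`). -/
noncomputable def bh {n : ℕ} (lam : ℂ) (d : ℕ) (φ : PolA n) : PolA n :=
  cE (hScal n lam d) (Dop^[d] φ)

/-- `bg^λ_d = g^λ_d(E) ∘ D^d` (equal to the identity for `d = 0`). -/
noncomputable def bg {n : ℕ} (lam : ℂ) (d : ℕ) (φ : PolA n) : PolA n :=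
  cE (gScal n lam d) (Dop^[d] φ)

/-- `N_k(φ,ψ) = (1/k!) Σ_{α ∈ {1,…,n}^k} ∂^kφ/∂ξ_α · ∂^kψ/∂u_α`. -/
noncomputable def Nop {n : ℕ} (k : ℕ) (φ ψ : PolA n) : PolA n :=
  (k.factorial : ℂ)⁻¹ •
    ∑ α : Fin k → Fin n,
      ((List.ofFn α).foldr (fun i acc => pderiv (Sum.inr i) acc) φ) *
      ((List.ofFn α).foldr (fun i acc => pderiv (Sum.inl i) acc) ψ)

/-- The coefficient `C^λ_p` of the Lecomte–Ovsienko star product. -/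
noncomputable def C (n : ℕ) (lam : ℂ) (p : ℕ) (φ ψ : PolA n) : PolA n :=
  ∑ i ∈ Finset.range (p + 1), ∑ j ∈ Finset.range (p + 1),
    ∑ k ∈ Finset.range (p + 1), ∑ m ∈ Finset.range (p + 1),
      if i + j + k + m = p then bg lam m (Nop k (bh lam i φ) (bh lam j ψ)) else 0

/-- The Poisson bracket `{φ,ψ}`. -/
noncomputable def pb {n : ℕ} (φ ψ : PolA n) : PolA n :=
  ∑ i : Fin n,
    (pderiv (Sum.inr i) φ * pderiv (Sum.inl i) ψ
      - pderiv (Sum.inl i) φ * pderiv (Sum.inr i) ψ)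

/-- `φ ∈ A^m` (ξ-homogeneous of degree `m`; for `m < 0` this forces `φ = 0`). -/
def IsXiHomog {n : ℕ} (m : ℤ) (φ : PolA n) : Prop :=
  ∀ d ∈ φ.support, (xiDeg d : ℤ) = m

/-- The set of spanning momentum functions of the projective `sl_{n+1}(ℝ)`-action. -/
noncomputable def momSet (n : ℕ) : Set (PolA n) :=
  (Set.range fun i : Fin n => (X (Sum.inr i) : PolA n)) ∪
  (Set.range fun ij : Fin n × Fin n =>
    (X (Sum.inl ij.1) * X (Sum.inr ij.2) : PolA n)) ∪
  (Set.range fun i : Fin n =>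
    (X (Sum.inl i) * ∑ k : Fin n, X (Sum.inl k) * X (Sum.inr k) : PolA n))

/-- The span `M` of the momentum functions. -/
noncomputable def momSpan (n : ℕ) : Submodule ℂ (PolA n) := Submodule.span ℂ (momSet n)

/-- The Weyl algebra `W` of differential operators with polynomial coefficients,
as a subalgebra of `End_ℂ(A)`. -/
noncomputable def Weyl (n : ℕ) : Subalgebra ℂ (Module.End ℂ (PolA n)) :=
  Algebra.adjoin ℂ
    ((Set.range fun i : Fin n =>
        (LinearMap.mulLeft ℂ (X (Sum.inl i)) : Module.End ℂ (PolA n))) ∪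
     (Set.range fun i : Fin n =>
        (LinearMap.mulLeft ℂ (X (Sum.inr i)) : Module.End ℂ (PolA n))) ∪
     (Set.range fun v : Fin n ⊕ Fin n =>
        ((pderiv v).toLinearMap : Module.End ℂ (PolA n))))

/-- A bilinear map `B : A × A → A` is bidifferential if it is a finite sum
`B(φ,ψ) = Σ_α A_α(φ)·B_α(ψ)` with `A_α, B_α` in the Weyl algebra. -/
def Bidiff (n : ℕ) (B : PolA n → PolA n → PolA n) : Prop :=
  ∃ (N : ℕ) (Aop Bop : Fin N → Weyl n),
    ∀ φ ψ : PolA n,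
      B φ ψ = ∑ α : Fin N,
        (Aop α : Module.End ℂ (PolA n)) φ * (Bop α : Module.End ℂ (PolA n)) ψ

/-- The scalar by which `T_p = ∏_{i=1}^{⌊p/2⌋}(E'+i)` acts on `A^m`. -/
noncomputable def TScal (n p m : ℕ) : ℂ :=
  ∏ i ∈ Finset.Icc 1 (p / 2), ((m : ℂ) + (n : ℂ) / 2 + (i : ℂ))

/-- The scalar by which `S_p = ∏_{i=1}^{⌊p/2⌋}(E'−i)` acts on `A^m`. -/
noncomputable def SScal (n p m : ℕ) : ℂ :=
  ∏ i ∈ Finset.Icc 1 (p / 2), ((m : ℂ) + (n : ℂ) / 2 - (i : ℂ))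

/-- The operator `T_p`. -/
noncomputable def Tp (n p : ℕ) : PolA n → PolA n := cE (TScal n p)

/-- The operator `S_p`. -/
noncomputable def Sp (n p : ℕ) : PolA n → PolA n := cE (SScal n p)

/-- The fiberwise Euler operator `E = Σ ξᵢ ∂/∂ξᵢ` as an endomorphism. -/
noncomputable def Elin (n : ℕ) : Module.End ℂ (PolA n) :=
  ∑ i : Fin n,
    (LinearMap.mulLeft ℂ (X (Sum.inr i)) : Module.End ℂ (PolA n)) ∘ₗ
      (pderiv (Sum.inr i)).toLinearMap

/-- `E' = E + n/2` as an endomorphism. -/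
noncomputable def E'lin (n : ℕ) : Module.End ℂ (PolA n) :=
  Elin n + ((n : ℂ) / 2) • 1

/-- `D` as an endomorphism. -/
noncomputable def Dlin (n : ℕ) : Module.End ℂ (PolA n) :=
  ∑ i : Fin n,
    ((pderiv (Sum.inl i)).toLinearMap : Module.End ℂ (PolA n)) ∘ₗ
      (pderiv (Sum.inr i)).toLinearMap

/-- `L^{(m)} = −(1/16)(ξ_m∘D − 2E'∘∂/∂u_m)∘D`. -/
noncomputable def Lop (n : ℕ) (m : Fin n) : Module.End ℂ (PolA n) :=
  (-(1 / 16 : ℂ)) •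
    (((LinearMap.mulLeft ℂ (X (Sum.inr m)) : Module.End ℂ (PolA n)) ∘ₗ Dlin n
        - (2 : ℂ) • (E'lin n ∘ₗ (pderiv (Sum.inl m)).toLinearMap)) ∘ₗ Dlin n)

end LO

namespace LO

lemma coeff_cE {n : ℕ} (c : ℕ → ℂ) (φ : PolA n) (d) :
    coeff d (cE c φ) = c (xiDeg d) * coeff d φ := by
  classical
  unfold cE
  rw [coeff_sum]
  simp only [coeff_monomial]
  rw [Finset.sum_ite_eq' φ.support d]
  split_ifs with h
  · rfl
  · rw [notMem_support_iff.mp h, mul_zero]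

lemma cE_add {n : ℕ} (c : ℕ → ℂ) (φ ψ : PolA n) : cE c (φ + ψ) = cE c φ + cE c ψ := by
  ext d; simp [coeff_cE, mul_add]

lemma cE_smul {n : ℕ} (c : ℕ → ℂ) (a : ℂ) (φ : PolA n) : cE c (a • φ) = a • cE c φ := by
  ext d; simp [coeff_cE]; ring

lemma cE_zero {n : ℕ} (c : ℕ → ℂ) : cE c (0 : PolA n) = 0 := by
  ext d; simp [coeff_cE]

lemma cE_const {n : ℕ} (a : ℂ) (φ : PolA n) : cE (fun _ => a) φ = a • φ := by
  ext d; simp [coeff_cE]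

lemma cE_cE {n : ℕ} (c c' : ℕ → ℂ) (φ : PolA n) :
    cE c (cE c' φ) = cE (fun k => c k * c' k) φ := by
  ext d; simp [coeff_cE, mul_assoc]

lemma cE_monomial {n : ℕ} (c : ℕ → ℂ) (d) (a : ℂ) :
    cE c (monomial d a : PolA n) = monomial d (c (xiDeg d) * a) := by
  classical
  ext e
  rw [coeff_cE, coeff_monomial, coeff_monomial]
  split_ifs with h
  · rw [h]
  · simp

lemma xiDeg_add {n : ℕ} (d e : (Fin n ⊕ Fin n) →₀ ℕ) : xiDeg (d + e) = xiDeg d + xiDeg e := by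
  simp [xiDeg, Finset.sum_add_distrib]

lemma xiDeg_single_inr {n : ℕ} (i : Fin n) :
    xiDeg (Finsupp.single (Sum.inr i : Fin n ⊕ Fin n) 1) = 1 := by
  classical
  simp [xiDeg, Finsupp.single_apply]

lemma X_mul_cE {n : ℕ} (m : Fin n) (c c' : ℕ → ℂ) (h : ∀ k, c' (k + 1) = c k) (φ : PolA n) :
    X (Sum.inr m) * cE c φ = cE c' (X (Sum.inr m) * φ) := by
  induction φ using MvPolynomial.induction_on' with
  | monomial d a =>
    rw [cE_monomial, X, monomial_mul, monomial_mul, cE_monomial, xiDeg_add, xiDeg_single_inr,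
      add_comm 1, h]
    simp
  | add p q hp hq => rw [cE_add, mul_add, mul_add, cE_add, hp, hq]

lemma E'_eq {n : ℕ} (φ : PolA n) : E'lin n φ = cE (fun k => (k : ℂ) + (n : ℂ) / 2) φ := by
  induction φ using MvPolynomial.induction_on' with
  | monomial d a =>
    rw [cE_monomial]
    simp only [E'lin, Elin, LinearMap.add_apply, LinearMap.sum_apply, LinearMap.comp_apply,
      LinearMap.smul_apply, LinearMap.mulLeft_apply,  Derivation.coeFn_coe, X_mul_pderiv_monomial, Module.End.one_apply, smul_monomial]
    rw [← map_sum, ← map_add]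
    congr 1
    simp only [xiDeg, nsmul_eq_mul, smul_eq_mul, ← Finset.sum_mul]
    push_cast
    ring
  | add p q hp hq => rw [cE_add, map_add, hp, hq]

lemma Dlin_eq {n : ℕ} (φ : PolA n) : Dlin n φ = Dop φ := by
  simp [Dlin, Dop]

lemma Dop_smul {n : ℕ} (a : ℂ) (φ : PolA n) : Dop (a • φ) = a • Dop φ := by
  rw [← Dlin_eq, map_smul, Dlin_eq]

lemma Dop_add {n : ℕ} (φ ψ : PolA n) : Dop (φ + ψ) = Dop φ + Dop ψ := by
  rw [← Dlin_eq, map_add, Dlin_eq, Dlin_eq]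

lemma Dop_zero {n : ℕ} : Dop (0 : PolA n) = 0 := by
  rw [← Dlin_eq, map_zero]

lemma pderiv_comm' {n : ℕ} (i j : Fin n ⊕ Fin n) (φ : PolA n) :
    pderiv i (pderiv j φ) = pderiv j (pderiv i φ) := by
  have h : ⁅(pderiv i : Derivation ℂ (PolA n) (PolA n)),
      (pderiv j : Derivation ℂ (PolA n) (PolA n))⁆ = 0 := by
    classical
    apply MvPolynomial.derivation_ext
    intro k
    simp only [Derivation.commutator_apply, pderiv_X, Derivation.coe_zero, Pi.zero_apply]
    have (a b : Fin n ⊕ Fin n) :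
        pderiv (R := ℂ) a (Pi.single (M := fun _ => PolA n) b (1 : PolA n) k) = 0 := by
      by_cases hk : k = b
      · subst hk; simp
      · simp [hk]
    simp [this]
  have := congrArg (fun D : Derivation ℂ (PolA n) (PolA n) => D φ) h
  simpa [Derivation.commutator_apply, sub_eq_zero] using this

lemma Dop_pderiv {n : ℕ} (i : Fin n) (φ : PolA n) :
    Dop (pderiv (Sum.inl i) φ) = pderiv (Sum.inl i) (Dop φ) := by
  simp only [Dop, map_sum]
  refine Finset.sum_congr rfl fun j _ => ?_
  rw [pderiv_comm' (Sum.inr j) (Sum.inl i), pderiv_comm' (Sum.inl j) (Sum.inl i)]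

lemma Dop_X_mul {n : ℕ} (m : Fin n) (φ : PolA n) :
    Dop (X (Sum.inr m) * φ) = X (Sum.inr m) * Dop φ + pderiv (Sum.inl m) φ := by
  classical
  simp only [Dop, Derivation.leibniz, pderiv_X, smul_eq_mul, map_add]
  simp only [Finset.sum_add_distrib, ← Finset.mul_sum]
  have h1 (j : Fin n) : (Pi.single (M := fun _ => PolA n) (Sum.inl j) 1 (Sum.inr m)) = 0 := by simp
  have h2 (j : Fin n) : pderiv (Sum.inl j)
      (Pi.single (M := fun _ => PolA n) (Sum.inr j : Fin n ⊕ Fin n) 1 (Sum.inr m)) = 0 := by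
    by_cases hk : m = j
    · subst hk; simp
    · simp [hk]
  simp only [h1, h2, mul_zero, Finset.sum_const_zero, add_zero, zero_add]
  congr 1
  rw [Finset.sum_eq_single m]
  · simp
  · intro j _ hj
    simp [hj.symm]
  · simp

lemma Dop_X {n : ℕ} (m : Fin n) : Dop (X (Sum.inr m) : PolA n) = 0 := by
  have := Dop_X_mul m (1 : PolA n)
  rw [mul_one] at this
  rw [this]
  simp [Dop]

lemma iter_Dop_X {n : ℕ} (m : Fin n) (d : ℕ) : Dop^[d + 1] (X (Sum.inr m) : PolA n) = 0 := by
  rw [Function.iterate_succ_apply, Dop_X]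
  induction d with
  | zero => rfl
  | succ d ih => rw [Function.iterate_succ_apply, Dop_zero, ih]

lemma bh_X {n : ℕ} (lam : ℂ) (m : Fin n) (d : ℕ) :
    bh lam (d + 1) (X (Sum.inr m) : PolA n) = 0 := by
  rw [bh, iter_Dop_X, cE_zero]

lemma bh_zero {n : ℕ} (lam : ℂ) (φ : PolA n) : bh lam 0 φ = φ := by
  ext d; simp [bh, coeff_cE, hScal]

lemma bg_zero {n : ℕ} (lam : ℂ) (φ : PolA n) : bg lam 0 φ = φ := by
  ext d; simp [bg, coeff_cE, gScal]

lemma ne1 (n k : ℕ) : ((2 : ℂ) * k + n + 1) ≠ 0 := by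
  exact_mod_cast (by omega : 2 * k + n + 1 ≠ 0)

lemma ne2 (n k : ℕ) : ((2 : ℂ) * k + n + 2) ≠ 0 := by
  exact_mod_cast (by omega : 2 * k + n + 2 ≠ 0)

lemma ne3 (n k : ℕ) : ((2 : ℂ) * k + n + 3) ≠ 0 := by
  exact_mod_cast (by omega : 2 * k + n + 3 ≠ 0)

lemma ne0 (n k : ℕ) (hn : 1 ≤ n) : ((2 : ℂ) * k + n) ≠ 0 := by
  exact_mod_cast (by omega : 2 * k + n ≠ 0)

lemma bh_one {n : ℕ} (φ : PolA n) : bh (1 / 2) 1 φ = (1 / 2 : ℂ) • Dop φ := by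
  rw [bh, ← cE_const]
  congr 1
  funext k
  have := ne1 n k
  simp only [hScal, Finset.prod_range_one, Nat.factorial_one, Nat.cast_one, Nat.cast_zero,
    inv_one, one_mul, add_zero, sub_zero]
  rw [div_eq_iff this]
  ring

lemma bg_one {n : ℕ} (φ : PolA n) : bg (1 / 2) 1 φ = (-1 / 2 : ℂ) • Dop φ := by
  rw [bg, ← cE_const]
  congr 1
  funext k
  have := ne1 n k
  simp only [gScal, Finset.prod_range_one, Nat.factorial_one, Nat.cast_one, Nat.cast_zero,
    inv_one, one_mul, add_zero, sub_zero]
  rw [div_eq_iff this]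
  ring

lemma bg_two {n : ℕ} (φ : PolA n) : bg (1 / 2) 2 φ =
    cE (fun k => (2 * (k : ℂ) + n + 3) / (8 * (2 * (k : ℂ) + n + 2))) (Dop (Dop φ)) := by
  rw [bg]
  congr 1
  funext k
  have := ne1 n k
  have := ne2 n k
  have h : (2 : ℂ) * k + 1 + n + 1 ≠ 0 := by convert ne2 n k using 1; ring
  simp [gScal, Finset.prod_range_succ]
  field_simp
  ring

lemma X_mul_bh_two {n : ℕ} (hn : 1 ≤ n) (m : Fin n) (φ : PolA n) :
    X (Sum.inr m) * bh (1 / 2) 2 φ =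
    cE (fun k => (2 * (k : ℂ) + n - 1) / (8 * (2 * (k : ℂ) + n)))
      (X (Sum.inr m) * Dop (Dop φ)) := by
  rw [bh]
  apply X_mul_cE
  intro k
  have := ne2 n k
  have h3 := ne3 n k
  have h : (2 : ℂ) * k + 1 + n + 2 ≠ 0 := by convert ne3 n k using 1; ring
  have h' : (2 : ℂ) * (k + 1) + n ≠ 0 := by convert ne2 n k using 1; ring
  simp [hScal, Finset.prod_range_succ]
  field_simp
  ring

lemma Nop_zero {n : ℕ} (φ ψ : PolA n) : Nop 0 φ ψ = φ * ψ := by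
  simp [Nop]

lemma Nop_zero_left {n : ℕ} (k : ℕ) (ψ : PolA n) : Nop k 0 ψ = 0 := by
  have h (l : List (Fin n)) :
      l.foldr (fun i acc => pderiv (Sum.inr i) acc) (0 : PolA n) = 0 := by
    induction l with
    | nil => rfl
    | cons a l ih => simp [ih]
  simp [Nop, h]

lemma Nop_zero_right {n : ℕ} (k : ℕ) (ψ : PolA n) : Nop k ψ 0 = 0 := by
  have h (l : List (Fin n)) :
      l.foldr (fun i acc => pderiv (Sum.inl i) acc) (0 : PolA n) = 0 := by
    induction l with
    | nil => rfl
    | cons a l ih => simp [ih]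
  simp [Nop, h]

lemma pderiv_pderiv_X {n : ℕ} (i j m : Fin n ⊕ Fin n) :
    pderiv i (pderiv j (X m : PolA n)) = 0 := by
  classical
  rw [pderiv_X]
  by_cases hk : m = j
  · subst hk; simp
  · simp [hk]

lemma Nop_one_X {n : ℕ} (m : Fin n) (ψ : PolA n) :
    Nop 1 (X (Sum.inr m)) ψ = pderiv (Sum.inl m) ψ := by
  classical
  simp only [Nop, List.ofFn_succ, List.ofFn_zero, List.foldr_cons, List.foldr_nil,
    Nat.factorial_one, Nat.cast_one, inv_one, one_smul]
  rw [← (Equiv.funUnique (Fin 1) (Fin n)).symm.sum_comp]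
  simp only [Equiv.funUnique_symm_apply, uniqueElim_const, pderiv_X]
  rw [Finset.sum_eq_single m]
  · simp
  · intro j _ hj
    simp [hj.symm]
  · simp

lemma Nop_two_X {n : ℕ} (m : Fin n) (ψ : PolA n) : Nop 2 (X (Sum.inr m)) ψ = 0 := by
  simp [Nop, List.ofFn_succ, pderiv_pderiv_X, -pderiv_X]

lemma Nop_one_X_right {n : ℕ} (m : Fin n) (ψ : PolA n) : Nop 1 ψ (X (Sum.inr m)) = 0 := by
  classical
  simp [Nop, List.ofFn_succ, pderiv_X]

lemma Nop_two_X_right {n : ℕ} (m : Fin n) (ψ : PolA n) : Nop 2 ψ (X (Sum.inr m)) = 0 := by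
  simp [Nop, List.ofFn_succ, pderiv_pderiv_X, -pderiv_X]

lemma bg_z {n : ℕ} (lam : ℂ) (d : ℕ) : bg lam d (0 : PolA n) = 0 := by
  have : Dop^[d] (0 : PolA n) = 0 := by
    induction d with
    | zero => rfl
    | succ d ih => rw [Function.iterate_succ_apply, Dop_zero, ih]
  rw [bg, this, cE_zero]

lemma bh_X1 {n : ℕ} (lam : ℂ) (m : Fin n) : bh lam 1 (X (Sum.inr m) : PolA n) = 0 := bh_X lam m 0

lemma bh_X2 {n : ℕ} (lam : ℂ) (m : Fin n) : bh lam 2 (X (Sum.inr m) : PolA n) = 0 := bh_X lam m 1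

lemma C_expand {n : ℕ} (lam : ℂ) (φ ψ : PolA n) :
    C n lam 2 φ ψ =
      bg lam 2 (Nop 0 (bh lam 0 φ) (bh lam 0 ψ)) + bg lam 1 (Nop 1 (bh lam 0 φ) (bh lam 0 ψ))
      + bg lam 0 (Nop 2 (bh lam 0 φ) (bh lam 0 ψ))
      + (bg lam 1 (Nop 0 (bh lam 0 φ) (bh lam 1 ψ)) + bg lam 0 (Nop 1 (bh lam 0 φ) (bh lam 1 ψ)))
      + bg lam 0 (Nop 0 (bh lam 0 φ) (bh lam 2 ψ))
      + (bg lam 1 (Nop 0 (bh lam 1 φ) (bh lam 0 ψ)) + bg lam 0 (Nop 1 (bh lam 1 φ) (bh lam 0 ψ))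
      + bg lam 0 (Nop 0 (bh lam 1 φ) (bh lam 1 ψ)))
      + bg lam 0 (Nop 0 (bh lam 2 φ) (bh lam 0 ψ)) := by
  simp only [C, Finset.sum_range_succ, Finset.sum_range_zero, Nat.reduceAdd, Nat.reduceEqDiff,
    if_true, if_false, zero_add, add_zero, OfNat.ofNat_ne_zero, OfNat.zero_ne_ofNat, zero_ne_one,
    one_ne_zero, OfNat.one_ne_ofNat, OfNat.ofNat_ne_one]

lemma C_left {n : ℕ} (m : Fin n) (ψ : PolA n) :
    C n (1 / 2) 2 (X (Sum.inr m)) ψ =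
      X (Sum.inr m) * bh (1 / 2) 2 ψ + bg (1 / 2) 1 (X (Sum.inr m) * bh (1 / 2) 1 ψ)
      + bg (1 / 2) 2 (X (Sum.inr m) * ψ) + pderiv (Sum.inl m) (bh (1 / 2) 1 ψ)
      + bg (1 / 2) 1 (pderiv (Sum.inl m) ψ) := by
  generalize (1 / 2 : ℂ) = lam
  rw [C_expand]
  simp only [bh_zero, bg_zero, bh_X1, bh_X2, Nop_zero_left, bg_z, Nop_zero, Nop_one_X, Nop_two_X,
    zero_mul, add_zero]
  ring

lemma C_right {n : ℕ} (m : Fin n) (ψ : PolA n) :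
    C n (1 / 2) 2 ψ (X (Sum.inr m)) =
      X (Sum.inr m) * bh (1 / 2) 2 ψ + bg (1 / 2) 1 (X (Sum.inr m) * bh (1 / 2) 1 ψ)
      + bg (1 / 2) 2 (X (Sum.inr m) * ψ) := by
  generalize (1 / 2 : ℂ) = lam
  rw [C_expand]
  simp only [bh_zero, bg_zero, bh_X1, bh_X2, Nop_zero_right, bg_z, Nop_zero, Nop_one_X_right,
    Nop_two_X_right, mul_zero, add_zero]
  rw [mul_comm (bh _ 2 ψ), mul_comm (bh _ 1 ψ), mul_comm ψ]
  ring

lemma C_symm {n : ℕ} (m : Fin n) (ψ : PolA n) :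
    C n (1 / 2) 2 (X (Sum.inr m)) ψ = C n (1 / 2) 2 ψ (X (Sum.inr m)) := by
  rw [C_left, C_right, bh_one ψ, bg_one (pderiv _ ψ), Dop_pderiv, Derivation.map_smul, add_assoc, ← add_smul]
  norm_num

lemma C_formula {n : ℕ} (hn : 1 ≤ n) (m : Fin n) (ψ : PolA n) :
    C n (1 / 2) 2 ψ (X (Sum.inr m)) =
      cE (fun k => (((k : ℂ) + (n : ℂ) / 2) * ((k : ℂ) + (n : ℂ) / 2 + 1))⁻¹)
          (LO.Lop n m ψ) := by
  rw [C_right, X_mul_bh_two hn, bh_one, bg_one, bg_two, mul_smul_comm, Dop_smul, Dop_X_mul,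
    Dop_X_mul, Dop_add, Dop_X_mul, Dop_pderiv]
  simp only [Lop, LinearMap.smul_apply, LinearMap.comp_apply, LinearMap.sub_apply, Dlin_eq, E'_eq,
    LinearMap.mulLeft_apply, Derivation.coeFn_coe]
  generalize X (Sum.inr m) * Dop (Dop ψ) = P
  generalize pderiv (Sum.inl m) (Dop ψ) = Q
  ext d
  simp only [coeff_add, coeff_smul, coeff_sub, coeff_cE, smul_eq_mul]
  generalize xiDeg d = k
  have h0 := ne0 n k hn
  have h2 := ne2 n k
  have h3 : (k : ℂ) + (n : ℂ) / 2 = (2 * k + n) / 2 := by ring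
  have h4 : (2 * k + n : ℂ) / 2 + 1 = (2 * k + n + 2) / 2 := by ring
  rw [h3, h4]
  field_simp
  ring

lemma Lop_mem (n : ℕ) (m : Fin n) : Lop n m ∈ Weyl n := by
  have hx (i : Fin n) :
      (LinearMap.mulLeft ℂ (X (Sum.inr i)) : Module.End ℂ (PolA n)) ∈ Weyl n :=
    Algebra.subset_adjoin (Or.inl (Or.inr ⟨i, rfl⟩))
  have hd (v : Fin n ⊕ Fin n) :
      ((pderiv v).toLinearMap : Module.End ℂ (PolA n)) ∈ Weyl n :=
    Algebra.subset_adjoin (Or.inr ⟨v, rfl⟩)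
  have hD : Dlin n ∈ Weyl n :=
    Subalgebra.sum_mem _ fun i _ => (Weyl n).mul_mem (hd _) (hd _)
  have hE : E'lin n ∈ Weyl n :=
    (Weyl n).add_mem (Subalgebra.sum_mem _ fun i _ => (Weyl n).mul_mem (hx _) (hd _))
      ((Weyl n).smul_mem (Weyl n).one_mem _)
  exact (Weyl n).smul_mem ((Weyl n).mul_mem ((Weyl n).sub_mem ((Weyl n).mul_mem (hx m) hD)
    ((Weyl n).smul_mem ((Weyl n).mul_mem hE (hd _)) _)) hD) _

end LO

/-- Corollary 6: `L^{(m)} = −(1/16)(ξ_m ∘ D − 2E' ∘ ∂/∂u_m) ∘ D`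
lies in the Weyl algebra and for all `ψ ∈ A`,
`C^{1/2}_2(ξ_m,ψ) = C^{1/2}_2(ψ,ξ_m) = (E'(E'+1))⁻¹(L^{(m)}ψ)`, i.e.
`E'(E'+1)(C^{1/2}_2(ξ_m,ψ)) = L^{(m)}ψ`. -/
theorem stmt_15 (n : ℕ) (hn : 1 ≤ n) (m : Fin n) :
    LO.Lop n m ∈ LO.Weyl n ∧
    ∀ ψ : PolA n,
      LO.C n (1 / 2) 2 (X (Sum.inr m)) ψ = LO.C n (1 / 2) 2 ψ (X (Sum.inr m)) ∧
      LO.cE (fun k => ((k : ℂ) + (n : ℂ) / 2) * ((k : ℂ) + (n : ℂ) / 2 + 1))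
          (LO.C n (1 / 2) 2 (X (Sum.inr m)) ψ) = LO.Lop n m ψ ∧
      LO.C n (1 / 2) 2 (X (Sum.inr m)) ψ =
        LO.cE (fun k => (((k : ℂ) + (n : ℂ) / 2) * ((k : ℂ) + (n : ℂ) / 2 + 1))⁻¹)
          (LO.Lop n m ψ) := by
  refine ⟨LO.Lop_mem n m, fun ψ => ⟨LO.C_symm m ψ, ?_, ?_⟩⟩
  · rw [LO.C_symm, LO.C_formula hn, LO.cE_cE]
    ext d
    rw [LO.coeff_cE]
    generalize LO.xiDeg d = k
    have h0 := LO.ne0 n k hn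
    have h2 := LO.ne2 n k
    have h3 : (k : ℂ) + (n : ℂ) / 2 = (2 * k + n) / 2 := by ring
    have h4 : (2 * k + n : ℂ) / 2 + 1 = (2 * k + n + 2) / 2 := by ring
    rw [h3, h4, mul_inv_cancel₀ (mul_ne_zero (div_ne_zero h0 two_ne_zero)
      (div_ne_zero h2 two_ne_zero)), one_mul]
  · rw [LO.C_symm, LO.C_formula hn]
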